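/- Let m ≥ 1, let l = 2, let 0 ≤ s ≤ 2m-1, and set d = (2^{4m}-1)/(2^m+1) + 2^s; assume gcd(d, 2^{4m}-1) = 1. Let σ be the multiplicative inverse of 2^s modulo 2^{4m}-1 and set u = gcd(d·σ + 1, 2^m+1). If u = 2^m + 1, then S_d(1) = 0, and for every z in GF(2^{4m}) with z^{2^m+1} = 1 and z ≠ 1 one has S_d(z) = 2^{3m}. -/

import Mathlib

noncomputable instance (p n : ℕ) [Fact p.Prime] : Fintype (GaloisField p n) :=
  Fintype.ofFinite _

/-- The Weil sum `S_d(z) = ∑_{x ∈ GF(2^n)} (-1)^{Tr(zx + x^d)}`, where `Tr` is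
the absolute trace from `GF(2^n)` to `GF(2)`. -/
noncomputable def binaryWeilSum (n d : ℕ) (z : GaloisField 2 n) : ℤ :=
  ∑ x : GaloisField 2 n,
    (-1 : ℤ) ^ (Algebra.trace (ZMod 2) (GaloisField 2 n) (z * x + x ^ d)).val

/-!
Write `q = 2 ^ m`, so that `F` has `q ^ 4` elements, and let `K` be its subfield of order `q ^ 2`.
The condition `u = q + 1` amounts to `2 ^ s ≡ 2` modulo `q + 1`, which makes `d` a Niho exponent:
if `x = c * v` is the polar decomposition of `x ≠ 0`, with `c ∈ K` and `v ^ (q ^ 2 + 1) = 1`, then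
`x ^ d = (c ^ q * v) ^ 2 ^ s`. The trace is invariant under Frobenius and `K` is its own orthogonal
complement for the trace form, so the sum over `c` for a fixed `v` detects whether
`z * v + v ^ q ∈ K`, and the Weil sum is `q ^ 2 * (N - 1)`, where `N` is the number of such `v`.

One of them is `v = 1`. The others are turned by the Cayley transform `y = (v + 1)⁻¹` into the
solutions of `y ^ q ^ 2 = y + 1` and `z * (y ^ 2 + y) ^ q = y ^ 2 + y`. For `z = 1` the last
equation says `y ^ q ∈ {y, y + 1}`, so that `y ^ q ^ 2 = y`: there is no solution. For `z = ζ ^ 2`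
with `ζ ≠ 1`, the substitution `t = y + ζ * y ^ q` leads to the separable equation
`ζ * t ^ q = t + 1`, all of whose `q` roots lie in `F`.
-/

open Finset Polynomial

theorem pow_sq_eq_self_of_pow_succ_eq_one {M : Type*} [Monoid M] {a : M} {q : ℕ}
    (ha : a ^ (q + 1) = 1) : a ^ q ^ 2 = a := by
  obtain _ | k := q
  · simpa [eq_comm] using ha
  · rw [show (k + 1) ^ 2 = (k + 1 + 1) * k + 1 by ring, pow_succ, pow_mul, ha, one_pow, one_mul]

theorem one_lt_of_card_eq_pow {α : Type*} [Fintype α] [Nontrivial α] {a k : ℕ}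
    (hα : Fintype.card α = a ^ k) : 1 < a := by
  by_contra! ha
  exact (hα ▸ Fintype.one_lt_card (α := α)).not_ge (pow_le_one₀ (Nat.zero_le a) ha)

theorem card_eval_eq_zero_of_dvd {F : Type*} [Field F] [Fintype F] [DecidableEq F] {P : F[X]}
    (hP : P ∣ X ^ Fintype.card F - X) : #{x : F | P.eval x = 0} = P.natDegree := by
  have hne : (X ^ Fintype.card F - X : F[X]) ≠ 0 :=
    FiniteField.X_pow_card_sub_X_ne_zero F Fintype.one_lt_card
  have hroots := FiniteField.roots_X_pow_card_sub_X F
  have hsplits : (X ^ Fintype.card F - X : F[X]).Splits := by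
    rw [splits_iff_card_roots, hroots,
      FiniteField.X_pow_card_sub_X_natDegree_eq F Fintype.one_lt_card]
    rfl
  have hnodup : P.roots.Nodup :=
    Multiset.nodup_of_le (roots.le_of_dvd hne hP) (hroots ▸ Finset.univ.nodup)
  rw [(hsplits.of_dvd hne hP).natDegree_eq_card_roots, ← Multiset.toFinset_card_of_nodup hnodup]
  congr 1
  ext x
  simp [ne_zero_of_dvd_ne_zero hne hP]

section PolarDecomposition

variable {F : Type*} [Field F] [Fintype F] [DecidableEq F] {Q : ℕ}

variable (F) in
/-- The subfield with `Q` elements of a finite field `F` whose cardinality is a power of `Q`, as the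
finite set of fixed points of `x ↦ x ^ Q`. -/
def subfieldOfCard (Q : ℕ) : Finset F := {x | x ^ Q = x}

variable (F) in
/-- The unit circle of a finite field `F` with `Q ^ 2` elements: the elements whose relative norm
`x * x ^ Q` to the subfield with `Q` elements is `1`. -/
def unitCircle (Q : ℕ) : Finset F := {x | x ^ (Q + 1) = 1}

@[simp]
theorem mem_subfieldOfCard {x : F} : x ∈ subfieldOfCard F Q ↔ x ^ Q = x := by
  simp [subfieldOfCard]

@[simp]
theorem mem_unitCircle {x : F} : x ∈ unitCircle F Q ↔ x ^ (Q + 1) = 1 := by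
  simp [unitCircle]

theorem card_subfieldOfCard (hF : Fintype.card F = Q ^ 2) : #(subfieldOfCard F Q) = Q := by
  have hdvd : (X ^ Q - X : F[X]) ∣ X ^ Fintype.card F - X := by
    have h := dvd_add (sub_dvd_pow_sub_pow (X ^ Q : F[X]) X Q) (dvd_refl (X ^ Q - X))
    rwa [sub_add_sub_cancel, ← pow_mul, ← sq, ← hF] at h
  have hcard := card_eval_eq_zero_of_dvd hdvd
  rw [FiniteField.X_pow_card_sub_X_natDegree_eq F (one_lt_of_card_eq_pow hF)] at hcard
  simpa [subfieldOfCard, sub_eq_zero] using hcard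

theorem card_unitCircle (hF : Fintype.card F = Q ^ 2) : #(unitCircle F Q) = Q + 1 := by
  have hdvd : (X ^ (Q + 1) - 1 : F[X]) ∣ X ^ Fintype.card F - X := by
    obtain ⟨k, rfl⟩ : ∃ k, Q = k + 1 := ⟨Q - 1, by have := one_lt_of_card_eq_pow hF; omega⟩
    have h := (sub_one_dvd_pow_sub_one (X ^ (k + 1 + 1) : F[X]) k).mul_left X
    convert h using 1
    rw [hF]
    ring
  have hcard := card_eval_eq_zero_of_dvd hdvd
  rw [← C_1, natDegree_X_pow_sub_C] at hcard
  simpa [unitCircle, sub_eq_zero] using hcard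

theorem sum_erase_zero_eq_sum_unitCircle [CharP F 2] {M : Type*} [AddCommMonoid M]
    (hF : Fintype.card F = Q ^ 2) (f : F → M) :
    ∑ x ∈ univ.erase 0, f x =
      ∑ v ∈ unitCircle F Q, ∑ c ∈ (subfieldOfCard F Q).erase 0, f (c * v) := by
  have hQ : 1 < Q := one_lt_of_card_eq_pow hF
  have hnorm {v c : F} (hv : v ∈ unitCircle F Q) (hc : c ∈ (subfieldOfCard F Q).erase 0) :
      (c * v) ^ (Q + 1) = c ^ 2 := by
    rw [mul_pow, mem_unitCircle.mp hv, pow_succ, mem_subfieldOfCard.mp (mem_of_mem_erase hc)]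
    ring
  have hmaps : Set.MapsTo (fun p : F × F ↦ p.2 * p.1)
      (unitCircle F Q ×ˢ (subfieldOfCard F Q).erase 0 : Finset (F × F)) (univ.erase (0 : F)) := by
    rintro ⟨v, c⟩ h
    obtain ⟨hv, hc⟩ := mem_product.mp h
    have : v ≠ 0 := by rintro rfl; simp at hv
    simp [this, ne_of_mem_erase hc]
  have hinj : Set.InjOn (fun p : F × F ↦ p.2 * p.1)
      (unitCircle F Q ×ˢ (subfieldOfCard F Q).erase 0 : Finset (F × F)) := by
    rintro ⟨v, c⟩ h ⟨v', c'⟩ h' heq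
    obtain ⟨hv, hc⟩ := mem_product.mp h
    obtain ⟨hv', hc'⟩ := mem_product.mp h'
    have hcc : c = c' := CharTwo.sq_injective <| by
      simpa only [hnorm hv hc, hnorm hv' hc'] using congrArg (· ^ (Q + 1)) heq
    subst hcc
    simpa [ne_of_mem_erase hc] using heq
  have hzero : (0 : F) ∈ subfieldOfCard F Q := by simp [(zero_lt_one.trans hQ).ne']
  have hcard : #(univ.erase (0 : F)) ≤ #(unitCircle F Q ×ˢ (subfieldOfCard F Q).erase 0) := by
    rw [card_product, card_erase_of_mem hzero, card_erase_of_mem (mem_univ _),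
      card_univ, hF, card_unitCircle hF, card_subfieldOfCard hF, ← Nat.sq_sub_sq, one_pow]
  rw [← sum_product']
  exact (sum_nbij _ hmaps hinj (surjOn_of_injOn_of_card_le _ hmaps hinj hcard)
    fun _ _ ↦ rfl).symm

end PolarDecomposition

section TraceChar

variable {F : Type*} [Field F] [Algebra (ZMod 2) F]

variable (F) in
/-- The canonical additive character `x ↦ (-1) ^ Tr x` of a field of characteristic two, where `Tr`
is the absolute trace. It takes values in `ℤ`, like the Weil sums built from it. -/
noncomputable def traceChar : AddChar F ℤ :=
  (AddChar.zmodChar 2 (by norm_num : (-1 : ℤ) ^ 2 = 1)).compAddMonoidHom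
    (Algebra.trace (ZMod 2) F).toAddMonoidHom

theorem traceChar_apply (x : F) :
    traceChar F x = (-1) ^ (Algebra.trace (ZMod 2) F x).val := rfl

variable [Finite F]

theorem traceChar_pow_two_pow (k : ℕ) (x : F) : traceChar F (x ^ 2 ^ k) = traceChar F x := by
  have : CharP F 2 := charP_of_injective_algebraMap' (ZMod 2) 2
  induction k with
  | zero => simp
  | succ k ih =>
    have h := Algebra.trace_eq_of_algEquiv (FiniteField.frobeniusAlgEquiv (ZMod 2) F 2) (x ^ 2 ^ k)
    rw [FiniteField.frobeniusAlgEquiv_apply, ZMod.card] at h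
    rw [pow_succ, pow_mul, traceChar_apply, h, ← traceChar_apply, ih]

theorem exists_traceChar_eq_neg_one : ∃ x, traceChar F x = -1 := by
  obtain ⟨x, hx⟩ := Algebra.trace_surjective (ZMod 2) F 1
  exact ⟨x, by simp [traceChar_apply, hx, ZMod.val_one]⟩

end TraceChar

section WeilSum

variable {F : Type*} [Field F] [Fintype F] [Algebra (ZMod 2) F]

/-- The Weil sum `∑ x, (-1) ^ Tr (z * x + x ^ d)` over an arbitrary finite field of characteristic
two; `binaryWeilSum` is its instance for `GaloisField 2 n`. -/
noncomputable def weilSum (d : ℕ) (z : F) : ℤ := ∑ x, traceChar F (z * x + x ^ d)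

variable [DecidableEq F] {n : ℕ}

theorem traceChar_eq_one_of_mem_subfieldOfCard (hF : Fintype.card F = (2 ^ n) ^ 2) {x : F}
    (hx : x ∈ subfieldOfCard F (2 ^ n)) : traceChar F x = 1 := by
  have : CharP F 2 := charP_of_injective_algebraMap' (ZMod 2) 2
  have hfinrank : Module.finrank (ZMod 2) F = n + n := by
    have h := Module.card_eq_pow_finrank (K := ZMod 2) (V := F)
    rw [hF, ZMod.card, ← pow_mul, mul_two] at h
    exact (Nat.pow_right_injective le_rfl h).symm
  have hperiod (i : ℕ) : x ^ 2 ^ (n + i) = x ^ 2 ^ i := by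
    rw [pow_add, pow_mul, mem_subfieldOfCard.mp hx]
  have htrace : Algebra.trace (ZMod 2) F x = 0 := by
    apply (algebraMap (ZMod 2) F).injective
    rw [FiniteField.algebraMap_trace_eq_sum_pow, hfinrank, Finset.sum_range_add, Nat.card_zmod]
    simp only [hperiod, CharTwo.add_self_eq_zero, map_zero]
  simp [traceChar_apply, htrace]

theorem exists_mem_subfieldOfCard_traceChar_mul_ne_one (hF : Fintype.card F = (2 ^ n) ^ 2) {y : F}
    (hy : y ∉ subfieldOfCard F (2 ^ n)) :
    ∃ c ∈ subfieldOfCard F (2 ^ n), traceChar F (c * y) ≠ 1 := by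
  have : CharP F 2 := charP_of_injective_algebraMap' (ZMod 2) 2
  obtain ⟨a, ha⟩ := exists_traceChar_eq_neg_one (F := F)
  have hinv (x : F) : (x ^ 2 ^ n) ^ 2 ^ n = x := by
    rw [← pow_mul, ← sq, ← hF, FiniteField.pow_card]
  have hfix (x : F) : (x + x ^ 2 ^ n) ^ 2 ^ n = x + x ^ 2 ^ n := by
    rw [add_pow_char_pow, hinv, add_comm]
  have hy0 : y + y ^ 2 ^ n ≠ 0 := by
    rwa [ne_eq, CharTwo.add_eq_zero, eq_comm, ← mem_subfieldOfCard]
  set c := (a + a ^ 2 ^ n) / (y + y ^ 2 ^ n) with hc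
  have hcmem : c ^ 2 ^ n = c := by rw [hc, div_pow, hfix, hfix]
  have hmem : a + c * y ∈ subfieldOfCard F (2 ^ n) := by
    have hcy : c * (y + y ^ 2 ^ n) = a + a ^ 2 ^ n := div_mul_cancel₀ _ hy0
    rw [mem_subfieldOfCard, add_pow_char_pow, mul_pow, hcmem]
    linear_combination hcy + (a ^ 2 ^ n - c * y) * CharTwo.two_eq_zero (R := F)
  have hchar := traceChar_eq_one_of_mem_subfieldOfCard hF hmem
  rw [AddChar.map_add_eq_mul, ha] at hchar
  exact ⟨c, mem_subfieldOfCard.mpr hcmem, by omega⟩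

theorem sum_subfieldOfCard_traceChar_mul (hF : Fintype.card F = (2 ^ n) ^ 2) (y : F) :
    ∑ c ∈ subfieldOfCard F (2 ^ n), traceChar F (c * y) =
      if y ∈ subfieldOfCard F (2 ^ n) then 2 ^ n else 0 := by
  have : CharP F 2 := charP_of_injective_algebraMap' (ZMod 2) 2
  split_ifs with hy
  · have hone : ∀ c ∈ subfieldOfCard F (2 ^ n), traceChar F (c * y) = 1 := fun c hc ↦
      traceChar_eq_one_of_mem_subfieldOfCard hF <| by
        rw [mem_subfieldOfCard, mul_pow, mem_subfieldOfCard.mp hc, mem_subfieldOfCard.mp hy]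
    rw [sum_congr rfl hone, sum_const, card_subfieldOfCard hF]
    simp
  · obtain ⟨b, hb, hne⟩ := exists_mem_subfieldOfCard_traceChar_mul_ne_one hF hy
    have hadd {x : F} (hx : x ∈ subfieldOfCard F (2 ^ n)) : x + b ∈ subfieldOfCard F (2 ^ n) := by
      rw [mem_subfieldOfCard, add_pow_char_pow, mem_subfieldOfCard.mp hx, mem_subfieldOfCard.mp hb]
    have hshift : ∑ c ∈ subfieldOfCard F (2 ^ n), traceChar F ((c + b) * y) =
        ∑ c ∈ subfieldOfCard F (2 ^ n), traceChar F (c * y) :=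
      sum_nbij' (· + b) (· + b) (fun _ ↦ hadd) (fun _ ↦ hadd)
        (fun c _ ↦ CharTwo.add_cancel_right c b) (fun c _ ↦ CharTwo.add_cancel_right c b)
        fun _ _ ↦ rfl
    simp only [add_mul, AddChar.map_add_eq_mul, ← sum_mul] at hshift
    exact (mul_right_eq_self₀.mp hshift).resolve_left hne

theorem sum_eq_mul_card_unitCircle_sub_one (hF : Fintype.card F = (2 ^ n) ^ 2) {f : F → ℤ}
    {g : F → F} (hfg : ∀ v ∈ unitCircle F (2 ^ n), ∀ c ∈ subfieldOfCard F (2 ^ n),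
      f (c * v) = traceChar F (c * g v)) :
    ∑ x, f x = 2 ^ n * (#{v ∈ unitCircle F (2 ^ n) | g v ∈ subfieldOfCard F (2 ^ n)} - 1) := by
  have : CharP F 2 := charP_of_injective_algebraMap' (ZMod 2) 2
  have hzero : (0 : F) ∈ subfieldOfCard F (2 ^ n) := by simp
  have hf0 : f 0 = 1 := by simpa using hfg 1 (by simp) 0 hzero
  have hray : ∀ v ∈ unitCircle F (2 ^ n), ∑ c ∈ (subfieldOfCard F (2 ^ n)).erase 0, f (c * v) =
      (if g v ∈ subfieldOfCard F (2 ^ n) then 2 ^ n else 0) - 1 := fun v hv ↦ by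
    rw [sum_erase_eq_sub hzero, zero_mul, hf0, sum_congr rfl (hfg v hv),
      sum_subfieldOfCard_traceChar_mul hF]
  rw [← add_sum_erase _ _ (mem_univ 0), hf0, sum_erase_zero_eq_sum_unitCircle hF,
    sum_congr rfl hray, sum_sub_distrib, ← sum_filter, sum_const, sum_const, card_unitCircle hF]
  simp only [nsmul_eq_mul]
  push_cast
  ring

end WeilSum

section Niho

theorem mul_pow_niho {F : Type*} [Field F] {q r : ℕ} (hq : 1 ≤ q) (hr0 : r ≠ 0)
    (hr : r ≡ 2 [MOD q + 1]) {c v : F} (hc : c ^ q ^ 2 = c) (hv : v ^ (q ^ 2 + 1) = 1) :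
    (c * v) ^ ((q - 1) * (q ^ 2 + 1) + r) = (c ^ q * v) ^ r := by
  obtain ⟨k, rfl⟩ := Nat.exists_eq_add_of_le' hq
  obtain rfl | hc0 := eq_or_ne c 0
  · simp [hr0]
  have hunit : (c ^ k) ^ (k + 1 + 1) = 1 := by
    apply mul_right_cancel₀ hc0
    rw [one_mul, ← pow_mul, ← pow_succ, ← show (k + 1) ^ 2 = k * (k + 1 + 1) + 1 by ring, hc]
  have hexp : (c ^ k) ^ r = (c ^ k) ^ 2 := pow_eq_pow_of_modEq hr hunit
  calc (c * v) ^ ((k + 1 - 1) * ((k + 1) ^ 2 + 1) + r)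
      = (c ^ (k + 1) ^ 2 * c) ^ k * c ^ r * ((v ^ ((k + 1) ^ 2 + 1)) ^ k * v ^ r) := by
        rw [Nat.add_sub_cancel]; ring
    _ = (c ^ k) ^ r * c ^ r * v ^ r := by rw [hc, hv, hexp]; ring
    _ = (c ^ (k + 1) * v) ^ r := by ring

theorem two_pow_four_mul_sub_one (m : ℕ) :
    2 ^ (4 * m) - 1 = (2 ^ m - 1) * ((2 ^ m) ^ 2 + 1) * (2 ^ m + 1) := by
  zify [Nat.one_le_two_pow (n := m), Nat.one_le_two_pow (n := 4 * m)]
  ring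

theorem modEq_two_of_dvd_niho_mul_add_one {q r σ : ℕ} (hq0 : q ≠ 0) (hq : Even q)
    (hσ : r * σ ≡ 1 [MOD q + 1]) (hdvd : q + 1 ∣ ((q - 1) * (q ^ 2 + 1) + r) * σ + 1) :
    r ≡ 2 [MOD q + 1] := by
  have hq1 : (q : ZMod (q + 1)) = -1 := by
    rw [eq_neg_iff_add_eq_zero]; exact_mod_cast ZMod.natCast_self (q + 1)
  have hσ : (r * σ : ZMod (q + 1)) = 1 := by
    exact_mod_cast (ZMod.natCast_eq_natCast_iff _ _ _).mpr hσ
  have hdvd : ((-1 - 1) * ((-1) ^ 2 + 1) + r : ZMod (q + 1)) * σ + 1 = 0 := by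
    have h := (ZMod.natCast_eq_zero_iff _ _).mpr hdvd
    push_cast [Nat.cast_sub (Nat.one_le_iff_ne_zero.mpr hq0)] at h
    rwa [hq1] at h
  obtain ⟨k, hk⟩ := hq
  have htwo : (-k * 2 : ZMod (q + 1)) = 1 := by
    have h : (q : ZMod (q + 1)) = k + k := by exact_mod_cast congrArg Nat.cast hk
    linear_combination hq1.symm.trans h
  rw [← ZMod.natCast_eq_natCast_iff, Nat.cast_two]
  linear_combination (-k * r) * hdvd + (-4 * k + k * r) * hσ + (2 - r) * htwo

theorem weilSum_niho {F : Type*} [Field F] [Fintype F] [DecidableEq F] [Algebra (ZMod 2) F]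
    {m s : ℕ} (hF : Fintype.card F = (2 ^ (2 * m)) ^ 2) (hs : 2 ^ s ≡ 2 [MOD 2 ^ m + 1]) (z : F) :
    weilSum ((2 ^ m - 1) * ((2 ^ m) ^ 2 + 1) + 2 ^ s) z =
      2 ^ (2 * m) * (#{v ∈ unitCircle F (2 ^ (2 * m)) |
        z * v + v ^ 2 ^ m ∈ subfieldOfCard F (2 ^ (2 * m))} - 1) := by
  refine sum_eq_mul_card_unitCircle_sub_one (g := fun v ↦ z * v + v ^ 2 ^ m) hF fun v hv c hc ↦ ?_
  have hQ : 2 ^ (2 * m) = (2 ^ m) ^ 2 := by rw [mul_comm, pow_mul]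
  rw [mem_unitCircle, hQ] at hv
  rw [mem_subfieldOfCard, hQ] at hc
  have hconj : (c ^ 2 ^ m * v) ^ 2 ^ m = c * v ^ 2 ^ m := by rw [mul_pow, ← pow_mul, ← sq, hc]
  rw [mul_pow_niho Nat.one_le_two_pow (by simp) hs hc hv, AddChar.map_add_eq_mul,
    traceChar_pow_two_pow, ← traceChar_pow_two_pow m (_ * v), hconj, ← AddChar.map_add_eq_mul]
  congr 1
  ring

end Niho

section CayleyTransform

variable {F : Type*} [Field F] [CharP F 2] {n : ℕ}

theorem add_one_pow_succ_eq_one_iff {w : F} (hw : w ≠ 0) :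
    (w + 1) ^ (2 ^ n + 1) = 1 ↔ w⁻¹ ^ 2 ^ n = w⁻¹ + 1 := by
  rw [pow_succ, add_pow_char_pow, one_pow, inv_pow, ← sub_eq_zero, ← CharTwo.add_eq_zero (a := _⁻¹)]
  field_simp
  ring_nf

theorem add_one_add_inv_eq {w : F} (hw : w ≠ 0) : w + 1 + (w + 1)⁻¹ = (w⁻¹ ^ 2 + w⁻¹)⁻¹ := by
  obtain rfl | hw1 := eq_or_ne w 1
  · simp [CharTwo.add_self_eq_zero]
  · have hw1 : 1 + w ≠ 0 := CharTwo.add_eq_zero.not.mpr hw1.symm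
    rw [add_comm w 1]
    field_simp
    linear_combination (w + 1) * CharTwo.two_eq_zero (R := F)

variable [Fintype F] [DecidableEq F] {k : ℕ} {z : F}

theorem card_filter_erase_one_unitCircle (p : F → Prop) [DecidablePred p] :
    #{v ∈ (unitCircle F (2 ^ n)).erase 1 | p (v + v⁻¹)} =
      #{y : F | y ^ 2 ^ n = y + 1 ∧ p (y ^ 2 + y)⁻¹} := by
  refine card_nbij' (fun v ↦ (v + 1)⁻¹) (fun y ↦ y⁻¹ + 1) ?_ ?_
    (fun v _ ↦ by simp [CharTwo.add_cancel_right]) (fun y _ ↦ by simp [CharTwo.add_cancel_right])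
  · intro v hv
    simp only [coe_filter, Set.mem_ofPred_eq, mem_erase, mem_unitCircle, mem_univ, true_and] at hv ⊢
    obtain ⟨⟨hv1, hv⟩, hp⟩ := hv
    obtain ⟨w, rfl⟩ : ∃ w, v = w + 1 := ⟨v + 1, (CharTwo.add_cancel_right v 1).symm⟩
    have hw : w ≠ 0 := by simpa using hv1
    rw [CharTwo.add_cancel_right, ← add_one_add_inv_eq hw]
    exact ⟨(add_one_pow_succ_eq_one_iff hw).mp hv, hp⟩
  · intro y hy
    simp only [coe_filter, Set.mem_ofPred_eq, mem_erase, mem_unitCircle, mem_univ, true_and] at hy ⊢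
    obtain ⟨hy, hp⟩ := hy
    have hy0 : y⁻¹ ≠ 0 := inv_ne_zero (by rintro rfl; simp at hy)
    rw [add_one_pow_succ_eq_one_iff hy0, add_one_add_inv_eq hy0, inv_inv]
    exact ⟨⟨by simpa using hy0, hy⟩, hp⟩

theorem mul_add_pow_mem_subfieldOfCard_iff {v : F} (hz : z ^ 2 ^ n = z)
    (hv : v ∈ unitCircle F (2 ^ n)) :
    z * v + v ^ 2 ^ k ∈ subfieldOfCard F (2 ^ n) ↔ z * (v + v⁻¹) = (v + v⁻¹) ^ 2 ^ k := by
  have hinv : v ^ 2 ^ n = v⁻¹ := eq_inv_of_mul_eq_one_left (by rwa [← pow_succ, ← mem_unitCircle])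
  rw [mem_subfieldOfCard, add_pow_char_pow, mul_pow, hz, pow_right_comm, hinv, add_pow_char_pow,
    ← CharTwo.add_eq_zero, ← CharTwo.add_eq_zero (b := _ + _)]
  ring_nf

theorem card_filter_unitCircle (hz : z ^ 2 ^ n = z) :
    #{v ∈ unitCircle F (2 ^ n) | z * v + v ^ 2 ^ k ∈ subfieldOfCard F (2 ^ n)} =
      #{y : F | y ^ 2 ^ n = y + 1 ∧ z * (y ^ 2 + y) ^ 2 ^ k = y ^ 2 + y} + 1 := by
  have hone : (1 : F) ∈ {v ∈ unitCircle F (2 ^ n) |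
      z * v + v ^ 2 ^ k ∈ subfieldOfCard F (2 ^ n)} := by
    simp [add_pow_char_pow, hz]
  have hinv (w : F) : z * w⁻¹ = w⁻¹ ^ 2 ^ k ↔ z * w ^ 2 ^ k = w := by
    obtain rfl | hw := eq_or_ne w 0
    · simp
    · rw [inv_pow, ← div_eq_mul_inv, div_eq_iff hw, inv_mul_eq_div, eq_div_iff (pow_ne_zero _ hw)]
  rw [← card_erase_add_one hone, ← filter_erase]
  simp only [← hinv]
  rw [← card_filter_erase_one_unitCircle fun w ↦ z * w = w ^ 2 ^ k]
  congr 2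
  exact filter_congr fun v hv ↦ mul_add_pow_mem_subfieldOfCard_iff hz (mem_of_mem_erase hv)

end CayleyTransform

section Counting

variable {F : Type*} [Field F] [CharP F 2] {φ : F →+* F} {ζ : F}

theorem map_sq_add_self_ne_of_map_map_eq_add_one {y : F} (hy : φ (φ y) = y + 1) :
    φ (y ^ 2 + y) ≠ y ^ 2 + y := by
  intro h
  have hfactor : (φ y + y) * (φ y + y + 1) = 0 := by
    simp only [map_add, map_pow] at h
    linear_combination h + (y ^ 2 + y + y * φ y) * CharTwo.two_eq_zero (R := F)
  obtain h0 | h1 := mul_eq_zero.mp hfactor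
  · rw [CharTwo.add_eq_zero] at h0
    simp [h0] at hy
  · have h1 : φ y = y + 1 := by
      linear_combination h1 - (y + 1) * CharTwo.two_eq_zero (R := F)
    simp [h1, add_assoc, CharTwo.add_self_eq_zero] at hy

variable [Fintype F] [DecidableEq F]

theorem card_filter_map_map_eq_add_one (hζ : ζ * φ ζ = 1) (hζ1 : ζ ≠ 1) :
    #{y : F | φ (φ y) = y + 1 ∧ ζ ^ 2 * φ (y ^ 2 + y) = y ^ 2 + y} =
      #{t : F | ζ * φ t = t + 1} := by
  have two : (2 : F) = 0 := CharTwo.two_eq_zero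
  have hζadd : ζ + 1 ≠ 0 := CharTwo.add_eq_zero.not.mpr hζ1
  -- For `t = y + ζ * φ y`, the second condition on `y` reads `(ζ + 1) * y = t ^ 2 + ζ * t`.
  have hsolve {y t : F} (hyt : (ζ + 1) * y = t ^ 2 + ζ * t) (ht : ζ * φ t = t + 1) :
      ζ * φ y = y + t := by
    have hmap : (φ ζ + 1) * φ y = φ t ^ 2 + φ ζ * φ t := by simpa using congrArg φ hyt
    apply mul_left_cancel₀ hζadd
    linear_combination ζ ^ 2 * hmap - hyt + (ζ * φ t + t + 2) * ht + (ζ * φ t - ζ * φ y) * hζ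
      + (t - ζ * t + 1) * two
  refine card_nbij' (fun y ↦ y + ζ * φ y) (fun t ↦ (t ^ 2 + ζ * t) / (ζ + 1)) ?_ ?_ ?_ ?_
  · intro y hy
    obtain ⟨hy, -⟩ : φ (φ y) = y + 1 ∧ _ := by simpa using hy
    simp only [coe_filter, mem_univ, true_and, Set.mem_ofPred_eq, map_add, map_mul]
    linear_combination hy + φ (φ y) * hζ
  · intro t ht
    replace ht : ζ * φ t = t + 1 := by simpa using ht
    obtain ⟨y, hy⟩ : ∃ y, (t ^ 2 + ζ * t) / (ζ + 1) = y := ⟨_, rfl⟩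
    have hyt : (ζ + 1) * y = t ^ 2 + ζ * t := by rw [← hy, mul_div_cancel₀ _ hζadd]
    have hmap : φ ζ * φ (φ y) = φ y + φ t := by simpa using congrArg φ (hsolve hyt ht)
    simp only [coe_filter, mem_univ, true_and, Set.mem_ofPred_eq, hy, map_add, map_pow]
    constructor
    · linear_combination ζ * hmap + hsolve hyt ht + ht - φ (φ y) * hζ + t * two
    · linear_combination (ζ * φ y + y + t + ζ) * hsolve hyt ht + hyt
        + (t * y - y + t ^ 2 + ζ * t) * two
  · intro y hy
    obtain ⟨-, hy⟩ : _ ∧ ζ ^ 2 * φ (y ^ 2 + y) = y ^ 2 + y := by simpa using hy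
    rw [map_add, map_pow] at hy
    rw [div_eq_iff hζadd]
    linear_combination hy + (y * ζ * φ y + y ^ 2) * two
  · intro t ht
    simp only [hsolve (mul_div_cancel₀ _ hζadd) (by simpa using ht : ζ * φ t = t + 1), ← add_assoc,
      CharTwo.add_self_eq_zero, zero_add]

variable {m : ℕ} {z : F}

theorem card_mul_pow_eq_add_one (hm : m ≠ 0) (hF : Fintype.card F = ((2 ^ m) ^ 2) ^ 2)
    (hζ : ζ ^ (2 ^ m + 1) = 1) : #{t : F | ζ * t ^ 2 ^ m = t + 1} = 2 ^ m := by
  have hζ0 : ζ ≠ 0 := by rintro rfl; simp at hζ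
  set P : F[X] := C ζ * X ^ 2 ^ m + (X + 1) with hP
  set R : F[X] := X ^ (2 ^ m) ^ 2 + (X + C ζ + 1) with hR
  have two : (2 : F[X]) = 0 := CharTwo.two_eq_zero
  have hPR : C ζ * P ^ 2 ^ m + P = R := by
    have hCζ : (C ζ : F[X]) * C ζ ^ 2 ^ m = 1 := by rw [← pow_succ', ← C_pow, hζ, C_1]
    rw [hR, hP, add_pow_char_pow, add_pow_char_pow, mul_pow, ← pow_mul, ← sq, one_pow]
    linear_combination X ^ (2 ^ m) ^ 2 * hCζ + C ζ * X ^ 2 ^ m * two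
  have hRX : R ^ (2 ^ m) ^ 2 + R = X ^ Fintype.card F - X := by
    have hCζ : (C ζ : F[X]) ^ (2 ^ m) ^ 2 = C ζ := by
      rw [← C_pow, pow_sq_eq_self_of_pow_succ_eq_one hζ]
    rw [hR, ← pow_mul 2, add_pow_char_pow, add_pow_char_pow, add_pow_char_pow, one_pow, pow_mul 2,
      hCζ, ← pow_mul, ← sq, hF]
    linear_combination (X ^ (2 ^ m) ^ 2 + X + C ζ + 1) * two
  have hPdvdR : P ∣ R := hPR ▸ ((dvd_pow_self P (by simp)).mul_left _).add dvd_rfl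
  have hdvd : P ∣ X ^ Fintype.card F - X :=
    hPdvdR.trans (hRX ▸ (dvd_pow_self R (by simp)).add dvd_rfl)
  have hdeg : P.natDegree = 2 ^ m := by
    have hlow : (X + 1 : F[X]).natDegree < (C ζ * X ^ 2 ^ m).natDegree := by
      rw [natDegree_C_mul_X_pow _ _ hζ0, ← C_1, natDegree_X_add_C]
      exact Nat.one_lt_two_pow hm
    rw [hP, natDegree_add_eq_left_of_natDegree_lt hlow, natDegree_C_mul_X_pow _ _ hζ0]
  rw [← card_eval_eq_zero_of_dvd hdvd] at hdeg
  simpa [hP, CharTwo.add_eq_zero] using hdeg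

theorem card_filter_unitCircle_add_pow :
    #{v ∈ unitCircle F (2 ^ (2 * m)) | v + v ^ 2 ^ m ∈ subfieldOfCard F (2 ^ (2 * m))} = 1 := by
  have h := card_filter_unitCircle (n := 2 * m) (k := m) (one_pow (M := F) _)
  simp only [one_mul] at h
  rw [h, Nat.add_eq_right, card_eq_zero, filter_eq_empty_iff]
  rintro y - ⟨hy, hw⟩
  rw [two_mul, pow_add, pow_mul] at hy
  exact map_sq_add_self_ne_of_map_map_eq_add_one (φ := iterateFrobenius F 2 m) hy hw

theorem card_filter_unitCircle_mul_add_pow (hF : Fintype.card F = (2 ^ (2 * m)) ^ 2)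
    (hz : z ^ (2 ^ m + 1) = 1) (hz1 : z ≠ 1) :
    #{v ∈ unitCircle F (2 ^ (2 * m)) | z * v + v ^ 2 ^ m ∈ subfieldOfCard F (2 ^ (2 * m))} =
      2 ^ m + 1 := by
  have hQ : 2 ^ (2 * m) = (2 ^ m) ^ 2 := by rw [mul_comm, pow_mul]
  have hm : m ≠ 0 := by rintro rfl; simpa using one_lt_of_card_eq_pow hF
  rw [card_filter_unitCircle (by rw [hQ, pow_sq_eq_self_of_pow_succ_eq_one hz])]
  obtain ⟨ζ, rfl : ζ ^ 2 = z⟩ := (Finite.injective_iff_surjective.mp CharTwo.sq_injective) z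
  have hζ : ζ ^ (2 ^ m + 1) = 1 := by
    rw [pow_right_comm] at hz
    exact CharTwo.sq_injective (by simpa using hz)
  have hζ1 : ζ ≠ 1 := by rintro rfl; simp at hz1
  have h := card_filter_map_map_eq_add_one (φ := iterateFrobenius F 2 m)
    (by rwa [iterateFrobenius_def, ← pow_succ']) hζ1
  simp only [iterateFrobenius_def, ← pow_mul, ← sq, ← hQ] at h
  exact congrArg (· + 1) (h.trans (card_mul_pow_eq_add_one hm (hQ ▸ hF) hζ))

end Counting

theorem weil_sum_on_subgroup_u_eq_general {F : Type*} [Field F] [Fintype F] [Algebra (ZMod 2) F]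
    {m s d σ : ℕ} (hF : Fintype.card F = 2 ^ (4 * m))
    (hd : d = (2 ^ (4 * m) - 1) / (2 ^ m + 1) + 2 ^ s) (hσ : 2 ^ s * σ ≡ 1 [MOD 2 ^ m + 1])
    (hu : 2 ^ m + 1 ∣ d * σ + 1) :
    weilSum d (1 : F) = 0 ∧
      ∀ z : F, z ^ (2 ^ m + 1) = 1 → z ≠ 1 → weilSum d z = 2 ^ (3 * m) := by
  classical
  have : CharP F 2 := charP_of_injective_algebraMap' (ZMod 2) 2
  have hcard : Fintype.card F = (2 ^ (2 * m)) ^ 2 := by rw [hF, ← pow_mul]; ring_nf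
  have hm : m ≠ 0 := by rintro rfl; simpa using one_lt_of_card_eq_pow hcard
  rw [two_pow_four_mul_sub_one, Nat.mul_div_cancel _ (Nat.succ_pos _)] at hd
  subst hd
  have hs : 2 ^ s ≡ 2 [MOD 2 ^ m + 1] :=
    modEq_two_of_dvd_niho_mul_add_one (by simp) (even_two.pow_of_ne_zero hm) hσ hu
  refine ⟨?_, fun z hz hz1 ↦ ?_⟩
  · simp only [weilSum_niho hcard hs, one_mul, card_filter_unitCircle_add_pow, Nat.cast_one,
      sub_self, mul_zero]
  · rw [weilSum_niho hcard hs, card_filter_unitCircle_mul_add_pow hcard hz hz1]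
    push_cast
    ring

/-- For `l = 2`, `d = (2^(4m)-1)/(2^m+1) + 2^s` coprime to `2^(4m)-1`, `σ` the
inverse of `2^s` modulo `2^(4m)-1`, and `u = gcd(dσ+1, 2^m+1)`: if `u = 2^m+1`
then `S_d(1) = 0`, and every `z ≠ 1` with `z^(2^m+1) = 1` satisfies
`S_d(z) = 2^(3m)`. -/
theorem weil_sum_on_subgroup_u_eq (m l s d σ u : ℕ) (hm : 1 ≤ m) (hl : l = 2)
    (hs : s ≤ 2 * m - 1)
    (hd : d = (2 ^ (2 * l * m) - 1) / (2 ^ m + 1) + 2 ^ s)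
    (hgcd : Nat.gcd d (2 ^ (2 * l * m) - 1) = 1)
    (hσ : 2 ^ s * σ ≡ 1 [MOD 2 ^ (2 * l * m) - 1])
    (hu : u = Nat.gcd (d * σ + 1) (2 ^ m + 1)) (hue : u = 2 ^ m + 1) :
    binaryWeilSum (2 * l * m) d 1 = 0 ∧
      ∀ z : GaloisField 2 (2 * l * m), z ^ (2 ^ m + 1) = 1 → z ≠ 1 →
        binaryWeilSum (2 * l * m) d z = 2 ^ (3 * m) := by
  subst hl
  exact weil_sum_on_subgroup_u_eq_general
    (Nat.card_eq_fintype_card.symm.trans (GaloisField.card 2 _ (by omega))) hd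
    (hσ.of_dvd ⟨_, (two_pow_four_mul_sub_one m).trans (mul_comm _ _)⟩)
    (Nat.gcd_eq_right_iff_dvd.mp (hu.symm.trans hue))
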